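/- Let Q be any quiver whose underlying graph is the extended Dynkin diagram Ẽ_6: vertex set {1,2,…,7} with edges {1,2}, {2,7}, {3,4}, {4,7}, {5,6}, {6,7}. Then for every vertex i of Q the frieze sequence (X^i_j)_{j≥0} satisfies a linear recurrence over the field ℚ(x_1,…,x_7). -/

import Mathlib

/-- The (ordered) edge description of the extended Dynkin diagram Ẽ_6 on vertices
`{1,…,7}` : edges `{1,2}, {2,7}, {3,4}, {4,7}, {5,6}, {6,7}`; the vertex labelled
`k ∈ {1,…,7}` corresponds to the index `k−1` of `Fin 7`. -/
def e6Edge (a b : ℕ) : Prop :=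
  (a = 0 ∧ b = 1) ∨ (a = 1 ∧ b = 6) ∨ (a = 2 ∧ b = 3) ∨ (a = 3 ∧ b = 6) ∨
  (a = 4 ∧ b = 5) ∨ (a = 5 ∧ b = 6)

/-!
On a tree, changing the orientation amounts to shifting the frieze sequences in time by a vertex
potential, and a sequence is linearly recurrent as soon as one of its shifts is, so all edges of Ẽ_6
may be oriented away from the center. Write `a_i`, `b_i` for the sequences at the outer and the
inner vertex of the arm `i ∈ ℤ/3`, and `c` for the central one. Then `b_i(n+1)` and `c(n+2)` are
polynomials (continuants) in shifts of `a_i`, and linearly recurrent sequences form an algebra, so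
only the `a_i` matter. The ratio `(a_{i+2}(n+4) + a_i(n)) / a_{i+1}(n+2)` is invariant under
`(i, n) ↦ (i+1, n+1)`, hence depends only on `n - i` modulo 3. So `m ↦ a_{i+m}(n+2m)` satisfies a
second-order recurrence with 3-periodic coefficients; its monodromy matrix has determinant 1 and a
trace `K` independent of `i` and `n`, whence `a_i(n+12) + a_i(n) = K a_i(n+6)`. The terms do not
vanish, because the recursion without subtractions makes them positive at `x = (1, …, 1)`.
-/

open Polynomial

section LocallyFinite

variable {R A : Type*} [CommRing R] [Ring A] [Algebra R A] {σ : A →ₐ[R] A} {u : A}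

/-- The subalgebra of the elements on which `σ` acts locally finitely, that is, which lie in a
finitely generated `σ`-stable submodule. -/
def locallyFiniteSubalgebra (σ : A →ₐ[R] A) : Subalgebra R A where
  carrier := {u | ∃ W : Submodule R A, W.FG ∧ W.map σ.toLinearMap ≤ W ∧ u ∈ W}
  algebraMap_mem' r :=
    ⟨1, Submodule.one_eq_span (R := R) (A := A) ▸ Submodule.fg_span_singleton 1,
      (Submodule.map_one σ).le, Submodule.algebraMap_mem r⟩
  add_mem' := by
    rintro u v ⟨W, hW, hσW, hu⟩ ⟨W', hW', hσW', hv⟩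
    refine ⟨W ⊔ W', hW.sup hW', ?_, Submodule.add_mem_sup hu hv⟩
    rw [Submodule.map_sup]
    exact sup_le_sup hσW hσW'
  mul_mem' := by
    rintro u v ⟨W, hW, hσW, hu⟩ ⟨W', hW', hσW', hv⟩
    refine ⟨W * W', hW.mul hW', ?_, Submodule.mul_mem_mul hu hv⟩
    rw [Submodule.map_mul]
    exact mul_le_mul' hσW hσW'

theorem map_mem_locallyFiniteSubalgebra (hu : u ∈ locallyFiniteSubalgebra σ) :
    σ u ∈ locallyFiniteSubalgebra σ := by
  obtain ⟨W, hW, hσW, hu⟩ := hu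
  exact ⟨W, hW, hσW, hσW ⟨u, hu, rfl⟩⟩

theorem mem_locallyFiniteSubalgebra_of_map_mem (hu : σ u ∈ locallyFiniteSubalgebra σ) :
    u ∈ locallyFiniteSubalgebra σ := by
  obtain ⟨W, hW, hσW, hu⟩ := hu
  refine ⟨W ⊔ R ∙ u, hW.sup (Submodule.fg_span_singleton u), ?_,
    Submodule.mem_sup_right (Submodule.mem_span_singleton_self u)⟩
  rw [Submodule.map_sup, Submodule.map_span, Set.image_singleton]
  exact le_sup_of_le_left (sup_le hσW ((Submodule.span_singleton_le_iff_mem _ _).mpr hu))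

theorem exists_monic_aeval_apply_eq_zero (hu : u ∈ locallyFiniteSubalgebra σ) :
    ∃ p : R[X], p.Monic ∧ aeval σ.toLinearMap p u = 0 := by
  obtain ⟨W, hW, hσW, hu⟩ := hu
  have : Module.Finite R W := Module.Finite.iff_fg.mpr hW
  have hmaps : ∀ w ∈ W, σ.toLinearMap w ∈ W := fun w hw => hσW ⟨w, hw, rfl⟩
  obtain ⟨p, hp, hpσ⟩ := LinearMap.exists_monic_and_aeval_eq_zero R (σ.toLinearMap.restrict hmaps)
  refine ⟨p, hp, ?_⟩
  have happly : ∀ q : R[X], (aeval (σ.toLinearMap.restrict hmaps) q ⟨u, hu⟩ : A) =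
      aeval σ.toLinearMap q u := fun q => by
    simp [aeval_eq_sum_range, Module.End.pow_restrict _ hmaps]
  rw [← happly, hpσ, LinearMap.zero_apply, Submodule.coe_zero]

theorem mem_locallyFiniteSubalgebra_of_monic {p : R[X]} (hp : p.Monic)
    (hu : aeval σ.toLinearMap p u = 0) : u ∈ locallyFiniteSubalgebra σ := by
  rcases subsingleton_or_nontrivial R with _ | _
  · have := Module.subsingleton R A
    rw [Subsingleton.elim u 0]
    exact zero_mem _
  let act : R[X] →ₗ[R] A := LinearMap.applyₗ u ∘ₗ (aeval σ.toLinearMap).toLinearMap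
  have hact : act.range = (degreeLT R p.natDegree).map act := by
    refine le_antisymm ?_ LinearMap.map_le_range
    rintro _ ⟨q, rfl⟩
    refine ⟨q %ₘ p, mem_degreeLT.mpr ?_, ?_⟩
    · rw [← degree_eq_natDegree hp.ne_zero]
      exact degree_modByMonic_lt q hp
    · conv_rhs => rw [← modByMonic_add_div q p, mul_comm p]
      simp [act, hu]
  refine ⟨act.range, ?_, ?_, 1, by simp [act]⟩
  · have : Module.Finite R (degreeLT R p.natDegree) :=
      Module.Finite.equiv (degreeLTEquiv R p.natDegree).symm
    exact hact ▸ (Module.Finite.iff_fg.mp this).map act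
  · rintro _ ⟨_, ⟨q, rfl⟩, rfl⟩
    exact ⟨X * q, by simp [act]⟩

end LocallyFinite

section RecurrentSequences

variable {R : Type*} [CommRing R] {u : ℕ → R}

/-- The time shift `(u_n) ↦ (u_{n+1})`, as an endomorphism of the algebra of sequences. -/
def sequenceShift (R : Type*) [CommRing R] : (ℕ → R) →ₐ[R] (ℕ → R) :=
  AlgHom.pi fun n => Pi.evalAlgHom R (fun _ => R) (n + 1)

/-- The algebra of linearly recurrent sequences, encoded as those whose shifts span a finitely
generated module. -/
def recurrentSubalgebra (R : Type*) [CommRing R] : Subalgebra R (ℕ → R) :=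
  locallyFiniteSubalgebra (sequenceShift R)

theorem sequenceShift_apply (u : ℕ → R) : sequenceShift R u = fun n => u (n + 1) :=
  rfl

theorem sequenceShift_pow_apply (k : ℕ) (u : ℕ → R) (n : ℕ) :
    ((sequenceShift R).toLinearMap ^ k) u n = u (n + k) := by
  induction k generalizing n with
  | zero => rfl
  | succ k ih =>
    rw [pow_succ', Module.End.mul_apply, add_comm k, ← add_assoc, ← ih]
    rfl

theorem aeval_sequenceShift_apply (p : R[X]) (u : ℕ → R) (n : ℕ) :
    aeval (sequenceShift R).toLinearMap p u n = p.sum fun k c => c * u (n + k) := by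
  simp [aeval_eq_sum_range, sum_over_range, sequenceShift_pow_apply]

theorem shift_mem_recurrentSubalgebra (hu : u ∈ recurrentSubalgebra R) (k : ℕ) :
    (fun n => u (n + k)) ∈ recurrentSubalgebra R := by
  induction k with
  | zero => exact hu
  | succ k ih =>
    simpa only [sequenceShift_apply, add_right_comm _ 1] using! map_mem_locallyFiniteSubalgebra ih

theorem mem_recurrentSubalgebra_of_shift_mem {k : ℕ}
    (hu : (fun n => u (n + k)) ∈ recurrentSubalgebra R) : u ∈ recurrentSubalgebra R := by
  induction k with
  | zero => exact hu
  | succ k ih =>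
    refine ih (mem_locallyFiniteSubalgebra_of_map_mem ?_)
    simpa only [sequenceShift_apply, add_right_comm _ 1] using! hu

theorem exists_recurrence_of_mem_recurrentSubalgebra [Nontrivial R]
    (hu : u ∈ recurrentSubalgebra R) :
    ∃ s : ℕ, 1 ≤ s ∧ ∃ coeff : Fin s → R, ∀ n, u (n + s) = ∑ t : Fin s, coeff t * u (n + t) := by
  obtain ⟨p, hp, hpu⟩ := exists_monic_aeval_apply_eq_zero hu
  have hXp : (X * p).Monic := monic_X.mul hp
  have hdeg : 1 ≤ (X * p).natDegree := by rw [natDegree_X_mul hp.ne_zero]; omega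
  refine ⟨(X * p).natDegree, hdeg, fun t => -(X * p).coeff t, fun n => ?_⟩
  have hsum : (X * p).sum (fun k c => c * u (n + k)) = 0 := by
    rw [← aeval_sequenceShift_apply, map_mul, Module.End.mul_apply, hpu, map_zero, Pi.zero_apply]
  rw [sum_over_range _ (by simp), Finset.sum_range_succ, hXp.coeff_natDegree, one_mul,
    Finset.sum_range] at hsum
  simp only [neg_mul, Finset.sum_neg_distrib]
  linear_combination hsum

end RecurrentSequences

section Orientation

variable {V : Type*} {E : V → V → Prop} {mult : V → V → ℕ}

/-- The quiver with arrow multiplicities `mult` is an orientation of the simple graph whose edges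
are the unordered pairs `{u, v}` with `E u v`. -/
structure IsOrientation (E : V → V → Prop) (mult : V → V → ℕ) : Prop where
  add_eq_one : ∀ u v, E u v → mult u v + mult v u = 1
  eq_zero : ∀ u v, ¬ E u v → ¬ E v u → mult u v = 0

theorem IsOrientation.wellFounded [Finite V] (hQ : IsOrientation E mult) {h : V → ℤ}
    (hh : ∀ u v, E u v → h u = h v + (mult v u - mult u v)) :
    WellFounded fun s v => mult s v ≠ 0 := by
  have hlt : ∀ s v, mult s v ≠ 0 → h s < h v := fun s v hsv => by
    rcases Classical.em (E s v) with hE | hE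
    · have := hQ.add_eq_one s v hE
      have := hh s v hE
      omega
    · have hE' : E v s := by_contra fun hE' => hsv (hQ.eq_zero s v hE hE')
      have := hQ.add_eq_one v s hE'
      have := hh v s hE'
      omega
  have : IsTrans V (InvImage (· < ·) h) := ⟨fun _ _ _ => lt_trans⟩
  have : Std.Irrefl (InvImage (· < ·) h) := ⟨fun _ => lt_irrefl _⟩
  exact Subrelation.wf (hlt _ _) (Finite.wellFounded_of_trans_of_irrefl (InvImage (· < ·) h))

end Orientation

theorem pow_mul_pow_eq_of_add_eq_one {M : Type*} [Monoid M] {u : ℕ → M} {m n j : ℕ}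
    (h : m + n = 1) : u (j + 1) ^ m * u j ^ n = u (j + m) := by
  obtain ⟨rfl, rfl⟩ | ⟨rfl, rfl⟩ : m = 0 ∧ n = 1 ∨ m = 1 ∧ n = 0 := by omega
  all_goals simp

section Frieze

variable {V R : Type*} [Fintype V] [CommSemiring R] {mult : V → V → ℕ} {X : V → ℕ → R}

/-- `X` is a family of frieze sequences, with arbitrary initial values, of the quiver with
`mult u v` arrows `u → v`. -/
def IsFrieze (mult : V → V → ℕ) (X : V → ℕ → R) : Prop :=
  ∀ v j, X v (j + 1) * X v j =
    1 + (∏ s, X s (j + 1) ^ mult s v) * ∏ d, X d j ^ mult v d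

theorem IsFrieze.mem_of_zero_mem (hX : IsFrieze mult X) (hwf : WellFounded fun s v => mult s v ≠ 0)
    {M : Submonoid R} (one_add_mem : ∀ x ∈ M, 1 + x ∈ M)
    (of_mul_mem : ∀ x, ∀ y ∈ M, x * y ∈ M → x ∈ M) (h₀ : ∀ v, X v 0 ∈ M) (v : V) (j : ℕ) :
    X v j ∈ M := by
  induction j generalizing v with
  | zero => exact h₀ v
  | succ j ih =>
    induction v using hwf.induction with
    | _ v ih_source =>
      refine of_mul_mem _ _ (ih v) (hX v j ▸ one_add_mem _ (mul_mem (prod_mem fun s _ => ?_)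
        (prod_mem fun d _ => pow_mem (ih d) _)))
      by_cases hs : mult s v = 0
      · rw [hs, pow_zero]
        exact one_mem M
      · exact pow_mem (ih_source s hs) _

theorem IsFrieze.shift {E : V → V → Prop} [DecidableRel E] (hX : IsFrieze mult X)
    (hQ : IsOrientation E mult) {t : V → ℕ} (ht : ∀ u v, E u v → t u = t v + mult u v) :
    IsFrieze (fun u v => if E v u then 1 else 0) fun v j => X v (j + t v) := by
  intro v j
  have hfactor : ∀ s, X s (j + t v + 1) ^ mult s v * X s (j + t v) ^ mult v s =
      X s (j + 1 + t s) ^ (if E v s then 1 else 0) * X s (j + t s) ^ (if E s v then 1 else 0) := by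
    intro s
    by_cases hvs : E v s
    · have hadd := hQ.add_eq_one v s hvs
      have htv := ht v s hvs
      have hsv : ¬ E s v := fun hsv => by have := ht s v hsv; omega
      rw [pow_mul_pow_eq_of_add_eq_one (by omega)]
      simp only [hvs, hsv, if_true, if_false, pow_one, pow_zero, mul_one]
      congr 1
      omega
    · by_cases hsv : E s v
      · rw [pow_mul_pow_eq_of_add_eq_one (hQ.add_eq_one s v hsv), add_assoc, ← ht s v hsv]
        simp [hvs, hsv]
      · simp [hvs, hsv, hQ.eq_zero]
  have := hX v (j + t v)
  rw [← Finset.prod_mul_distrib] at this ⊢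
  simpa only [hfactor, add_right_comm j 1] using this

end Frieze

section PositiveQuotients

variable {A K R : Type*} [CommSemiring A] [CommSemiring K] [Algebra A K] [CommSemiring R]
  [PartialOrder R] [IsStrictOrderedRing R] {φ : A →+* R} {x y : K}

/-- The elements of `K` which are quotients of elements of `A` with positive image under `φ`. They
are nonzero when `A` embeds into `K`, and closed under addition, multiplication and division. -/
def positiveQuotients (K : Type*) [CommSemiring K] [Algebra A K] (φ : A →+* R) : Submonoid K where
  carrier := {x | ∃ p q : A, 0 < φ p ∧ 0 < φ q ∧ x * algebraMap A K q = algebraMap A K p}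
  one_mem' := ⟨1, 1, by simp, by simp, by simp⟩
  mul_mem' := by
    rintro x y ⟨p, q, hp, hq, hx⟩ ⟨p', q', hp', hq', hy⟩
    refine ⟨p * p', q * q', by simpa using mul_pos hp hp', by simpa using mul_pos hq hq', ?_⟩
    rw [map_mul, map_mul, mul_mul_mul_comm, hx, hy]

theorem one_add_mem_positiveQuotients (hx : x ∈ positiveQuotients K φ) :
    1 + x ∈ positiveQuotients K φ := by
  obtain ⟨p, q, hp, hq, hx⟩ := hx
  refine ⟨q + p, q, by simpa using add_pos hq hp, hq, ?_⟩
  rw [add_mul, one_mul, hx, map_add]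

theorem mem_positiveQuotients_of_mul_mem (hy : y ∈ positiveQuotients K φ)
    (hxy : x * y ∈ positiveQuotients K φ) : x ∈ positiveQuotients K φ := by
  obtain ⟨p, q, hp, hq, hxy⟩ := hxy
  obtain ⟨p', q', hp', hq', hy⟩ := hy
  refine ⟨p * q', q * p', by simpa using mul_pos hp hq', by simpa using mul_pos hq hp', ?_⟩
  rw [map_mul, map_mul, ← hxy, ← hy]
  ring

theorem algebraMap_mem_positiveQuotients {p : A} (hp : 0 < φ p) :
    algebraMap A K p ∈ positiveQuotients K φ :=
  ⟨p, 1, hp, by simp, by simp⟩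

theorem ne_zero_of_mem_positiveQuotients [FaithfulSMul A K] (hx : x ∈ positiveQuotients K φ) :
    x ≠ 0 := by
  rintro rfl
  obtain ⟨p, q, hp, -, h⟩ := hx
  rw [zero_mul, eq_comm, FaithfulSMul.algebraMap_eq_zero_iff] at h
  simp [h] at hp

theorem IsFrieze.ne_zero_of_zero_eq_algebraMap_X {V k : Type*} [Fintype V] [CommSemiring k]
    [PartialOrder k] [IsStrictOrderedRing k] [Algebra (MvPolynomial V k) K]
    [FaithfulSMul (MvPolynomial V k) K]
    {mult : V → V → ℕ} {X : V → ℕ → K} (hX : IsFrieze mult X)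
    (hwf : WellFounded fun s v => mult s v ≠ 0)
    (hX0 : ∀ v, X v 0 = algebraMap (MvPolynomial V k) K (.X v)) (v : V) (j : ℕ) : X v j ≠ 0 := by
  refine ne_zero_of_mem_positiveQuotients (φ := MvPolynomial.eval (1 : V → k))
    (hX.mem_of_zero_mem hwf (fun _ => one_add_mem_positiveQuotients)
      (fun _ _ => mem_positiveQuotients_of_mul_mem) (fun v => ?_) v j)
  rw [hX0]
  exact algebraMap_mem_positiveQuotients (by simp)

end PositiveQuotients

@[to_additive]
theorem prod_zmod_three {M : Type*} [CommMonoid M] (f : ZMod 3 → M) (i : ZMod 3) :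
    ∏ k, f k = f i * f (i + 1) * f (i + 2) := by
  have hprod : ∀ g : ZMod 3 → M, ∏ k, g k = g 0 * g 1 * g 2 := Fin.prod_univ_three
  rw [← Equiv.prod_comp (Equiv.addLeft i), hprod]
  simp only [Equiv.coe_addLeft, add_zero]

theorem add_eq_mul_of_periodic_three {R : Type*} [CommRing R] {γ : ZMod 3 → R} {w : ℕ → R}
    {k : ZMod 3} (hw : ∀ m : ℕ, w (m + 2) + w m = γ (k + m) * w (m + 1)) (m : ℕ) :
    w (m + 6) + w m = (∏ i, γ i - ∑ i, γ i) * w (m + 3) := by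
  have h₀ := hw m
  have h₁ := hw (m + 1)
  have h₂ := hw (m + 2)
  have h₃ := hw (m + 3)
  have h₄ := hw (m + 4)
  have three : (3 : ZMod 3) = 0 := rfl
  have four : (4 : ZMod 3) = 1 := rfl
  simp only [Nat.cast_add, Nat.cast_one, Nat.cast_ofNat, ← add_assoc, three, four, add_zero]
    at h₀ h₁ h₂ h₃ h₄
  rw [prod_zmod_three γ (k + m), sum_zmod_three γ (k + m)]
  -- With continuants of `γ` as coefficients, only `w m`, `w (m + 3)` and `w (m + 6)` survive.
  linear_combination h₀ + γ (k + m) * h₁ + (γ (k + m) * γ (k + m + 1) - 1) * h₂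
    + γ (k + m + 1) * h₃ + h₄

/-- A frieze with nonzero terms on Ẽ_6 oriented away from its center: `c` is the sequence at the
center, `b i` and `a i` are those at the inner and the outer vertex of the arm `i`. The arms are
indexed by `ZMod 3` to make their cyclic permutation available. -/
structure IsTripodFrieze {R : Type*} [CommRing R] (c : ℕ → R) (b a : ZMod 3 → ℕ → R) : Prop where
  center : ∀ n, c (n + 1) * c n = 1 + ∏ i, b i n
  inner : ∀ i n, b i (n + 1) * b i n = 1 + c (n + 1) * a i n
  outer : ∀ i n, a i (n + 1) * a i n = 1 + b i (n + 1)
  center_ne_zero : ∀ n, c n ≠ 0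
  inner_ne_zero : ∀ i n, b i n ≠ 0
  outer_ne_zero : ∀ i n, a i n ≠ 0

namespace IsTripodFrieze

section IsDomain

variable {R : Type*} [CommRing R] {c : ℕ → R} {b a : ZMod 3 → ℕ → R}

theorem center_mul (h : IsTripodFrieze c b a) (i : ZMod 3) (n : ℕ) :
    c (n + 1) * c n = 1 + b i n * b (i + 1) n * b (i + 2) n := by
  rw [h.center, prod_zmod_three _ i]

theorem inner_succ (h : IsTripodFrieze c b a) (i : ZMod 3) (n : ℕ) :
    b i (n + 1) = a i n * a i (n + 1) - 1 := by
  linear_combination -h.outer i n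

variable [IsDomain R]

theorem center_add_two (h : IsTripodFrieze c b a) (i : ZMod 3) (n : ℕ) :
    c (n + 2) = a i n * a i (n + 1) * a i (n + 2) - a i n - a i (n + 2) := by
  have hinner := h.inner i (n + 1)
  rw [h.inner_succ i (n + 1), h.inner_succ i n] at hinner
  refine mul_right_cancel₀ (h.outer_ne_zero i (n + 1)) ?_
  linear_combination -hinner

theorem outer_mul_inner_add_two (h : IsTripodFrieze c b a) (i : ZMod 3) (n : ℕ) :
    a i n * b i (n + 2) = c (n + 2) + a i (n + 2) := by
  linear_combination a i n * h.inner_succ i (n + 1) - h.center_add_two i n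

theorem outer_add_two_mul_inner (h : IsTripodFrieze c b a) (i : ZMod 3) (n : ℕ) :
    a i (n + 2) * b i (n + 1) = c (n + 2) + a i n := by
  linear_combination a i (n + 2) * h.inner_succ i n - h.center_add_two i n

theorem outer_add_three_mul_center (h : IsTripodFrieze c b a) (i : ZMod 3) (n : ℕ) :
    a i (n + 3) * c (n + 2) = b i (n + 1) + b (i + 1) (n + 2) * b (i + 2) (n + 2) := by
  refine mul_right_cancel₀ (h.inner_ne_zero i (n + 2)) ?_
  linear_combination h.center_mul i (n + 2) - h.inner i (n + 1)
    + c (n + 2) * h.outer_add_two_mul_inner i (n + 1)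

theorem outer_mul_center_add_three (h : IsTripodFrieze c b a) (i : ZMod 3) (n : ℕ) :
    a i n * c (n + 3) = b i (n + 3) + b (i + 1) (n + 2) * b (i + 2) (n + 2) := by
  refine mul_right_cancel₀ (h.inner_ne_zero i (n + 2)) ?_
  linear_combination h.center_mul i (n + 2) - h.inner i (n + 2)
    + c (n + 3) * h.outer_mul_inner_add_two i n

theorem center_exchange (h : IsTripodFrieze c b a) (i : ZMod 3) (n : ℕ) :
    c (n + 3) * (b i (n + 2) * a (i + 2) (n + 2) + b (i + 1) (n + 1) * a (i + 2) n) =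
      c (n + 2) * (b i (n + 2) * a (i + 1) (n + 1) + b (i + 2) (n + 3) * a (i + 1) (n + 3)) := by
  refine mul_right_cancel₀
    (mul_ne_zero (h.inner_ne_zero (i + 1) (n + 2)) (h.inner_ne_zero (i + 2) (n + 2))) ?_
  have hL : (b i (n + 2) * a (i + 2) (n + 2) + b (i + 1) (n + 1) * a (i + 2) n) *
      (b (i + 1) (n + 2) * b (i + 2) (n + 2)) =
      c (n + 2) * (1 + c (n + 3) * a (i + 2) (n + 2) + c (n + 2) * a (i + 1) (n + 1)
        + a (i + 1) (n + 1) * a (i + 2) (n + 2)) := by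
    linear_combination b (i + 1) (n + 2) * b (i + 1) (n + 1) * h.outer_mul_inner_add_two (i + 2) n
      + (c (n + 2) + a (i + 2) (n + 2)) * h.inner (i + 1) (n + 1)
      - a (i + 2) (n + 2) * h.center_mul i (n + 2)
  have hR : (b i (n + 2) * a (i + 1) (n + 1) + b (i + 2) (n + 3) * a (i + 1) (n + 3)) *
      (b (i + 1) (n + 2) * b (i + 2) (n + 2)) =
      c (n + 3) * (1 + c (n + 3) * a (i + 2) (n + 2) + c (n + 2) * a (i + 1) (n + 1)
        + a (i + 1) (n + 1) * a (i + 2) (n + 2)) := by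
    linear_combination
      b (i + 2) (n + 3) * b (i + 2) (n + 2) * h.outer_add_two_mul_inner (i + 1) (n + 1)
      + (c (n + 3) + a (i + 1) (n + 1)) * h.inner (i + 2) (n + 2)
      - a (i + 1) (n + 1) * h.center_mul i (n + 2)
  linear_combination c (n + 3) * hL - c (n + 2) * hR

theorem cyclic_invariance (h : IsTripodFrieze c b a) (i : ZMod 3) (n : ℕ) :
    (a (i + 2) (n + 4) + a i n) * a (i + 2) (n + 3) =
      (a i (n + 5) + a (i + 1) (n + 1)) * a (i + 1) (n + 2) := by
  refine mul_right_cancel₀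
    (mul_ne_zero (h.center_ne_zero (n + 3)) (h.center_ne_zero (n + 4))) ?_
  have hL : (a (i + 2) (n + 4) + a i n) * a (i + 2) (n + 3) * c (n + 3) =
      c (n + 3) * (b (i + 2) (n + 4) + 1 + b (i + 1) (n + 2))
      + b i (n + 3) * a (i + 2) (n + 3) + b (i + 1) (n + 2) * a (i + 2) (n + 1) := by
    linear_combination c (n + 3) * h.outer (i + 2) (n + 3)
      + a (i + 2) (n + 3) * h.outer_mul_center_add_three i n
      + b (i + 1) (n + 2) * h.outer_add_two_mul_inner (i + 2) (n + 1)
  have hR : (a i (n + 5) + a (i + 1) (n + 1)) * a (i + 1) (n + 2) * c (n + 4) =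
      c (n + 4) * (b (i + 2) (n + 4) + 1 + b (i + 1) (n + 2))
      + b i (n + 3) * a (i + 1) (n + 2) + b (i + 2) (n + 4) * a (i + 1) (n + 4) := by
    linear_combination c (n + 4) * h.outer (i + 1) (n + 1)
      + a (i + 1) (n + 2) * h.outer_add_three_mul_center i (n + 2)
      + b (i + 2) (n + 4) * h.outer_mul_inner_add_two (i + 1) (n + 2)
  linear_combination c (n + 4) * hL - c (n + 3) * hR + h.center_exchange i (n + 1)

end IsDomain

section Field

variable {F : Type*} [Field F] {c : ℕ → F} {b a : ZMod 3 → ℕ → F}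

theorem exists_add_eq_mul (h : IsTripodFrieze c b a) :
    ∃ γ : ZMod 3 → F, ∀ i (n : ℕ),
      a (i + 2) (n + 4) + a i n = γ (n - i) * a (i + 1) (n + 2) := by
  let α : ZMod 3 → ℕ → F := fun i n => (a (i + 2) (n + 4) + a i n) / a (i + 1) (n + 2)
  have hα_succ : ∀ i n, α (i + 1) (n + 1) = α i n := fun i n => by
    rw [div_eq_div_iff (h.outer_ne_zero _ _) (h.outer_ne_zero _ _)]
    have hi : i + 1 + 2 = i := by rw [add_assoc]; exact add_zero i
    have hi' : i + 1 + 1 = i + 2 := add_assoc i 1 1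
    rw [hi, hi']
    exact (h.cyclic_invariance i n).symm
  have hα : ∀ i n, α i n = α (i - n) 0 := fun i n => by
    induction n generalizing i with
    | zero => simp
    | succ n ih =>
      rw [← sub_add_cancel i 1, hα_succ, ih]
      congr 1
      push_cast
      ring
  refine ⟨fun k => α (-k) 0, fun i n => ?_⟩
  simp only [neg_sub, ← hα]
  exact (div_mul_cancel₀ _ (h.outer_ne_zero _ _)).symm

theorem exists_outer_add_twelve (h : IsTripodFrieze c b a) :
    ∃ K : F, ∀ i n, a i (n + 12) + a i n = K * a i (n + 6) := by
  obtain ⟨γ, hγ⟩ := h.exists_add_eq_mul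
  refine ⟨∏ k, γ k - ∑ k, γ k, fun i n => ?_⟩
  let w : ℕ → F := fun m => a (i + m) (n + 2 * m)
  have hw : ∀ m, w (m + 2) + w m = γ (n - i + m) * w (m + 1) := fun m => by
    have hk : (n : ZMod 3) + 2 * m - (i + m) = n - i + m := by ring
    simpa [w, hk, mul_add, ← add_assoc]
      using hγ (i + m) (n + 2 * m)
  have three : (3 : ZMod 3) = 0 := rfl
  have six : (6 : ZMod 3) = 0 := rfl
  simpa [w, three, six] using add_eq_mul_of_periodic_three hw 0

theorem outer_mem_recurrentSubalgebra (h : IsTripodFrieze c b a) (i : ZMod 3) :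
    a i ∈ recurrentSubalgebra F := by
  obtain ⟨K, hK⟩ := h.exists_outer_add_twelve
  refine mem_locallyFiniteSubalgebra_of_monic (p := X ^ 12 - C K * X ^ 6 + 1) (by monicity!) ?_
  ext n
  simp [sequenceShift_pow_apply, sub_add_eq_add_sub, hK]

theorem inner_mem_recurrentSubalgebra (h : IsTripodFrieze c b a) (i : ZMod 3) :
    b i ∈ recurrentSubalgebra F := by
  have ha := h.outer_mem_recurrentSubalgebra i
  have hb : (fun n => b i (n + 1)) = a i * (fun n => a i (n + 1)) - 1 := funext (h.inner_succ i)
  refine mem_recurrentSubalgebra_of_shift_mem (k := 1) (hb ▸ ?_)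
  exact sub_mem (mul_mem ha (shift_mem_recurrentSubalgebra ha 1)) (one_mem _)

theorem center_mem_recurrentSubalgebra (h : IsTripodFrieze c b a) :
    c ∈ recurrentSubalgebra F := by
  have ha := h.outer_mem_recurrentSubalgebra 0
  have ha₁ := shift_mem_recurrentSubalgebra ha 1
  have ha₂ := shift_mem_recurrentSubalgebra ha 2
  have hc : (fun n => c (n + 2)) =
      a 0 * (fun n => a 0 (n + 1)) * (fun n => a 0 (n + 2)) - a 0 - fun n => a 0 (n + 2) :=
    funext (h.center_add_two 0)
  refine mem_recurrentSubalgebra_of_shift_mem (k := 2) (hc ▸ ?_)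
  exact sub_mem (sub_mem (mul_mem (mul_mem ha ha₁) ha₂) ha) ha₂

end Field

end IsTripodFrieze

section ExtendedE6

instance (a b : ℕ) : Decidable (e6Edge a b) :=
  inferInstanceAs (Decidable (_ ∨ _))

theorem exists_e6_potential {M : Type*} [AddMonoid M] (δ : Fin 7 → Fin 7 → M) :
    ∃ t : Fin 7 → M, ∀ u v : Fin 7, e6Edge u v → t u = t v + δ u v := by
  refine ⟨![δ 1 6 + δ 0 1, δ 1 6, δ 3 6 + δ 2 3, δ 3 6, δ 5 6 + δ 4 5, δ 5 6, 0], ?_⟩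
  intro u v
  fin_cases u <;> fin_cases v <;> simp [e6Edge]

theorem IsOrientation.wellFounded_of_e6Edge {mult : Fin 7 → Fin 7 → ℕ}
    (hQ : IsOrientation (fun u v : Fin 7 => e6Edge u v) mult) :
    WellFounded fun s v => mult s v ≠ 0 := by
  obtain ⟨h, hh⟩ := exists_e6_potential fun u v => (mult v u - mult u v : ℤ)
  exact hQ.wellFounded hh

theorem IsFrieze.isTripodFrieze {R : Type*} [CommRing R] {Y : Fin 7 → ℕ → R}
    (hY : IsFrieze (fun u v : Fin 7 => if e6Edge v u then 1 else 0) Y) (hne : ∀ v j, Y v j ≠ 0) :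
    IsTripodFrieze (Y 6) (fun i => Y (![1, 3, 5] i)) fun i => Y (![0, 2, 4] i) where
  center n := by simpa [Fin.prod_univ_seven, e6Edge, prod_zmod_three _ 0] using hY 6 n
  inner i n := by
    fin_cases i
    · simpa [Fin.prod_univ_seven, e6Edge, mul_comm] using hY 1 n
    · simpa [Fin.prod_univ_seven, e6Edge, mul_comm] using hY 3 n
    · simpa [Fin.prod_univ_seven, e6Edge, mul_comm] using hY 5 n
  outer i n := by
    fin_cases i
    · simpa [Fin.prod_univ_seven, e6Edge] using hY 0 n
    · simpa [Fin.prod_univ_seven, e6Edge] using hY 2 n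
    · simpa [Fin.prod_univ_seven, e6Edge] using hY 4 n
  center_ne_zero := hne 6
  inner_ne_zero _ := hne _
  outer_ne_zero _ := hne _

end ExtendedE6

theorem stmt_2_general {F : Type*} [Field F] (mult : Fin 7 → Fin 7 → ℕ)
    (hedge : ∀ u v : Fin 7, e6Edge u.val v.val → mult u v + mult v u = 1)
    (hnonedge : ∀ u v : Fin 7, ¬ e6Edge u.val v.val → ¬ e6Edge v.val u.val → mult u v = 0)
    (X : Fin 7 → ℕ → F) (hne : ∀ v j, X v j ≠ 0)
    (hXrec : ∀ v (j : ℕ), X v (j + 1) * X v j =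
      1 + (∏ s : Fin 7, X s (j + 1) ^ mult s v) * (∏ d : Fin 7, X d j ^ mult v d)) (i : Fin 7) :
    ∃ s : ℕ, 1 ≤ s ∧ ∃ coeff : Fin s → F,
      ∀ j : ℕ, X i (j + s) = ∑ t : Fin s, coeff t * X i (j + t.val) := by
  have hQ : IsOrientation (fun u v : Fin 7 => e6Edge u v) mult := ⟨hedge, hnonedge⟩
  obtain ⟨t, ht⟩ := exists_e6_potential mult
  have tripod := (IsFrieze.shift hXrec hQ ht).isTripodFrieze fun v j => hne v (j + t v)
  apply exists_recurrence_of_mem_recurrentSubalgebra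
  apply mem_recurrentSubalgebra_of_shift_mem (k := t i)
  fin_cases i
  exacts [tripod.outer_mem_recurrentSubalgebra 0, tripod.inner_mem_recurrentSubalgebra 0,
    tripod.outer_mem_recurrentSubalgebra 1, tripod.inner_mem_recurrentSubalgebra 1,
    tripod.outer_mem_recurrentSubalgebra 2, tripod.inner_mem_recurrentSubalgebra 2,
    tripod.center_mem_recurrentSubalgebra]

/-- Let `Q` be any orientation of Ẽ_6, encoded by the arrow multiplicity
function `mult` : for each edge `{u,v}` there is exactly one arrow between `u` and `v`
(in one of the two directions), and there are no other arrows. Then every frieze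
sequence `(X^i_j)_j` in `ℚ(x_1,…,x_7)` satisfies a linear recurrence. -/
theorem stmt_2
    (mult : Fin 7 → Fin 7 → ℕ)   -- number of arrows from `u` to `v`
    (hedge : ∀ u v : Fin 7, e6Edge u.val v.val → mult u v + mult v u = 1)
    (hnonedge : ∀ u v : Fin 7, ¬ e6Edge u.val v.val → ¬ e6Edge v.val u.val → mult u v = 0)
    -- the frieze sequences
    (X : Fin 7 → ℕ → FractionRing (MvPolynomial (Fin 7) ℚ))
    (hX0 : ∀ v, X v 0 = algebraMap (MvPolynomial (Fin 7) ℚ)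
      (FractionRing (MvPolynomial (Fin 7) ℚ)) (MvPolynomial.X v))
    (hXrec : ∀ v (j : ℕ), X v (j+1) * X v j =
      1 + (∏ s : Fin 7, X s (j+1) ^ mult s v) * (∏ d : Fin 7, X d j ^ mult v d)) :
    -- every frieze sequence satisfies a linear recurrence
    ∀ i : Fin 7, ∃ s : ℕ, 1 ≤ s ∧
      ∃ coeff : Fin s → FractionRing (MvPolynomial (Fin 7) ℚ),
        ∀ j : ℕ, X i (j + s) = ∑ t : Fin s, coeff t * X i (j + t.val) := by
  have hQ : IsOrientation (fun u v : Fin 7 => e6Edge u v) mult := ⟨hedge, hnonedge⟩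
  exact stmt_2_general mult hedge hnonedge X
    (IsFrieze.ne_zero_of_zero_eq_algebraMap_X hXrec hQ.wellFounded_of_e6Edge hX0) hXrec
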